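/- The set of codes of pairs (R, t), where R is a finite term rewriting system over a finite signature and t is a term over that signature such that R is weakly confluent on t, is Σ⁰₁-complete. -/

import Mathlib

/-!
**Membership.** `Term.encode` is a bijection between terms and `ℕ`, and functions defined by
primitive recursive structural recursion on terms are primitive recursive on codes
(`Term.primrec_rec`). A term `t` has finitely many one-step reducts, and they are computable: a
substitution matching a left-hand side `l` against `t` sends the variables of `l` to subterms of
`t`, so a bounded search finds it (`mem_reducts_iff`). Hence a single number `k` bounds the lengths
of joining reductions for all peaks at `t`, and weak confluence on `t` becomes `∃ k, JoinsWithin`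
with a primitive recursive matrix (`wcrOn_iff`), so that unbounded search for `k` gives
`sigma01_wcr`.

**Hardness.** Every Σ⁰₁ set is the halting set of a program `c` for Mathlib's continuation machine
`Turing.ToPartrec` (`exists_code_of_sigma01`). One fixed TRS, `Machine.rules`, simulates this
machine on terms `norm(c, k, v)` and `ret(k, v)`, where `c` is a program, `k` a continuation and
`v` a list of numerals. The simulation is deterministic and ends in the normal form `done` exactly
if the program halts (`Machine.reduces_doneT_iff`). Two further rules `start(c, k, v) → done` and
`start(c, k, v) → norm(c, k, v)` create at `start(c, halt, [n])` a single nontrivial peak, which is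
joinable iff `norm(c, halt, [n])` reduces to `done`, that is, iff `c` halts on `[n]`
(`Machine.wcrOn_initT_iff`). So `n ↦ (Machine.rules, start(c, halt, [n]))` is the required
many-one reduction.
-/

/-- First-order terms over the fixed countably infinite set of variables
(named by naturals): a term is a variable or a function symbol (named by a
natural number) applied to a list of argument terms. -/
inductive Term : Type
  | var : ℕ → Term
  | app : ℕ → List Term → Term

namespace Term

/-- Homomorphic application of a substitution (a map from variables to terms). -/
def subst (σ : ℕ → Term) : Term → Term
  | var n => σ n
  | app f ts => app f (ts.attach.map (fun x => subst σ x.1))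
decreasing_by
  have := List.sizeOf_lt_of_mem x.2
  simp only [Term.app.sizeOf_spec]; omega

/-- An injective encoding of terms into the natural numbers. -/
def encode : Term → ℕ
  | var n => Nat.pair 0 n
  | app f ts => Nat.pair (f + 1) (Encodable.encode (ts.attach.map (fun x => encode x.1)))
decreasing_by
  have := List.sizeOf_lt_of_mem x.2
  simp only [Term.app.sizeOf_spec]; omega

end Term

/-- `IsVarOf n t` holds iff the variable `n` occurs in the term `t`. -/
inductive IsVarOf (n : ℕ) : Term → Prop
  | var : IsVarOf n (.var n)
  | app {f : ℕ} {ts : List Term} {t : Term} : t ∈ ts → IsVarOf n t → IsVarOf n (.app f ts)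

/-- A term is ground if no variable occurs in it. -/
def Ground (t : Term) : Prop := ∀ n : ℕ, ¬ IsVarOf n t

/-- A (finite) signature is presented by a finite list of pairs
(function symbol, arity); `WFSig` states that each symbol has a unique arity. -/
def WFSig (sig : List (ℕ × ℕ)) : Prop :=
  ∀ p ∈ sig, ∀ q ∈ sig, p.1 = q.1 → p.2 = q.2

/-- `WFTerm sig t`: `t` is a term over the signature `sig`, i.e. every function
symbol occurring in `t` belongs to `sig` and is applied to the correct number
of arguments. -/
inductive WFTerm (sig : List (ℕ × ℕ)) : Term → Prop
  | var (n : ℕ) : WFTerm sig (.var n)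
  | app {f : ℕ} {ts : List Term} : (f, ts.length) ∈ sig →
      (∀ t ∈ ts, WFTerm sig t) → WFTerm sig (.app f ts)

/-- `WFTRS sig R`: the finite list of rules `R` is a term rewriting system over
the signature `sig`: `sig` assigns unique arities, both sides of every rule are
terms over `sig`, no left-hand side is a variable, and every variable occurring
in a right-hand side occurs in the corresponding left-hand side. -/
def WFTRS (sig : List (ℕ × ℕ)) (R : List (Term × Term)) : Prop :=
  WFSig sig ∧ ∀ p ∈ R, WFTerm sig p.1 ∧ WFTerm sig p.2 ∧
    (∀ n : ℕ, p.1 ≠ .var n) ∧ (∀ n : ℕ, IsVarOf n p.2 → IsVarOf n p.1)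

/-- The one-step rewrite relation `→_R` of a TRS `R`: application of a rule
under a substitution, closed under arbitrary one-hole contexts (i.e. embedded
at any argument position at any depth). -/
inductive Rewrite (R : List (Term × Term)) : Term → Term → Prop
  | rule (l r : Term) (σ : ℕ → Term) (h : (l, r) ∈ R) :
      Rewrite R (l.subst σ) (r.subst σ)
  | congr (f : ℕ) (ts₁ ts₂ : List Term) (t t' : Term) (h : Rewrite R t t') :
      Rewrite R (.app f (ts₁ ++ t :: ts₂)) (.app f (ts₁ ++ t' :: ts₂))

/-- Many-step rewriting `→*_R` (reflexive-transitive closure of `→_R`). -/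
def Reduces (R : List (Term × Term)) : Term → Term → Prop :=
  Relation.ReflTransGen (Rewrite R)

/-- `t` is a normal form of `R` (admits no `→_R`-step). -/
def NormalForm (R : List (Term × Term)) (t : Term) : Prop := ∀ u : Term, ¬ Rewrite R t u

/-- `R` is strongly normalizing (terminating) on `t`:
no infinite rewrite sequence starts at `t`. -/
def SNon (R : List (Term × Term)) (t : Term) : Prop :=
  ¬ ∃ f : ℕ → Term, f 0 = t ∧ ∀ n : ℕ, Rewrite R (f n) (f (n + 1))

/-- `R` is weakly normalizing on `t`: some reduction from `t` ends in a normal form. -/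
def WNon (R : List (Term × Term)) (t : Term) : Prop :=
  ∃ s : Term, Reduces R t s ∧ NormalForm R s

/-- `R` is confluent (Church-Rosser) on `t`. -/
def CRon (R : List (Term × Term)) (t : Term) : Prop :=
  ∀ t₁ t₂ : Term, Reduces R t t₁ → Reduces R t t₂ →
    ∃ d : Term, Reduces R t₁ d ∧ Reduces R t₂ d

/-- `R` is weakly confluent (weakly Church-Rosser) on `t`. -/
def WCRon (R : List (Term × Term)) (t : Term) : Prop :=
  ∀ t₁ t₂ : Term, Rewrite R t t₁ → Rewrite R t t₂ →
    ∃ d : Term, Reduces R t₁ d ∧ Reduces R t₂ d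

/-- A root step `s →_{R,ε} t`: `s = ℓσ` and `t = rσ` for some rule `ℓ → r` of `R`. -/
def RootStep (R : List (Term × Term)) (s t : Term) : Prop :=
  ∃ (l r : Term) (σ : ℕ → Term), (l, r) ∈ R ∧ s = l.subst σ ∧ t = r.subst σ

/-- Code of a rewrite rule. -/
def encodeRule (p : Term × Term) : ℕ := Nat.pair p.1.encode p.2.encode

/-- Code of a finite TRS. -/
def encodeTRS (R : List (Term × Term)) : ℕ := Encodable.encode (R.map encodeRule)

/-- Code of a finite signature. -/
def encodeSig (sig : List (ℕ × ℕ)) : ℕ := Encodable.encode sig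

/-- A set `A ⊆ ℕ` is Σ⁰₁ (recursively enumerable) if it is the domain of a
partial computable function. -/
def Sigma01 (A : Set ℕ) : Prop :=
  ∃ f : ℕ →. ℕ, Nat.Partrec f ∧ ∀ n : ℕ, n ∈ A ↔ (f n).Dom

/-- `B` is many-one reducible to `A`: there is a total computable `g` with
`n ∈ B ↔ g n ∈ A` for all `n`. -/
def ManyOneRed (B A : Set ℕ) : Prop :=
  ∃ g : ℕ → ℕ, Computable g ∧ ∀ n : ℕ, n ∈ B ↔ g n ∈ A

/-- `A` is Σ⁰₁-complete. -/
def Sigma01Complete (A : Set ℕ) : Prop :=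
  Sigma01 A ∧ ∀ B : Set ℕ, Sigma01 B → ManyOneRed B A

/-- A set `A ⊆ ℕ` is Π⁰₂ if there is a decidable (computable) predicate
`P ⊆ ℕ³` with `n ∈ A ↔ ∀ x ∃ y, P n x y`. -/
def Pi02 (A : Set ℕ) : Prop :=
  ∃ p : ℕ → ℕ → ℕ → Bool,
    Computable (fun x : ℕ × ℕ × ℕ => p x.1 x.2.1 x.2.2) ∧
    ∀ n : ℕ, n ∈ A ↔ ∀ x : ℕ, ∃ y : ℕ, p n x y = true

/-- `A` is Π⁰₂-complete. -/
def Pi02Complete (A : Set ℕ) : Prop :=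
  Pi02 A ∧ ∀ B : Set ℕ, Pi02 B → ManyOneRed B A

/-- A set `A ⊆ ℕ` is Π¹₁ if there is a decidable (computable) predicate
`P ⊆ ℕ²` such that `n ∈ A` iff for every function `α : ℕ → ℕ` there exists
`k` with `P n ⟨α 0, …, α (k-1)⟩`, where `⟨·⟩` is the (computable) coding of
finite sequences of naturals. -/
def Pi11 (A : Set ℕ) : Prop :=
  ∃ p : ℕ → ℕ → Bool,
    Computable (fun x : ℕ × ℕ => p x.1 x.2) ∧
    ∀ n : ℕ, n ∈ A ↔ ∀ α : ℕ → ℕ, ∃ k : ℕ,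
      p n (Encodable.encode (List.ofFn (fun i : Fin k => α i))) = true

/-- `A` is Π¹₁-complete. -/
def Pi11Complete (A : Set ℕ) : Prop :=
  Pi11 A ∧ ∀ B : Set ℕ, Pi11 B → ManyOneRed B A

/-! ### Terms and their codes -/

namespace Term

instance : Inhabited Term := ⟨var 0⟩

/-- Structural induction on terms, with the hypothesis for all arguments at once. -/
theorem induct {P : Term → Prop} (hv : ∀ n, P (var n))
    (ha : ∀ f ts, (∀ t ∈ ts, P t) → P (app f ts)) : ∀ t, P t
  | var n => hv n
  | app f ts => ha f ts (fun t _ => induct hv ha t)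
decreasing_by
  have := List.sizeOf_lt_of_mem ‹t ∈ ts›
  simp only [Term.app.sizeOf_spec]; omega

@[simp] theorem subst_var (σ : ℕ → Term) (n : ℕ) : (var n).subst σ = σ n := by
  rw [subst]

@[simp] theorem subst_app (σ : ℕ → Term) (f : ℕ) (ts : List Term) :
    (app f ts).subst σ = app f (ts.map (subst σ)) := by
  rw [subst, List.attach_map_val (f := subst σ)]

@[simp] theorem encode_var (n : ℕ) : (var n).encode = Nat.pair 0 n := by
  rw [encode]

@[simp] theorem encode_app (f : ℕ) (ts : List Term) :
    (app f ts).encode = Nat.pair (f + 1) (Encodable.encode (ts.map encode)) := by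
  rw [encode, List.attach_map_val (f := encode)]

theorem encode_injective : Function.Injective encode := by
  intro s
  induction s using induct with
  | hv n =>
    intro t h
    cases t with
    | var m => simpa using h
    | app g us => simp at h
  | ha f ts ih =>
    intro t h
    cases t with
    | var m => simp at h
    | app g us =>
      simp only [encode_app, Nat.pair_eq_pair, Nat.add_right_cancel_iff,
        Encodable.encode_inj] at h
      obtain ⟨rfl, h⟩ := h
      congr 1
      induction ts generalizing us with
      | nil => cases us <;> simp_all
      | cons a as iha =>
        cases us with
        | nil => simp at h
        | cons b bs =>
          simp only [List.map_cons, List.cons.injEq] at h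
          rw [ih a (by simp) h.1, iha (fun t ht => ih t (by simp [ht])) bs h.2]

theorem mem_le_encode_list {l : List ℕ} {n : ℕ} (h : n ∈ l) : n < Encodable.encode l := by
  induction l with
  | nil => simp at h
  | cons a as ih =>
    rw [Encodable.encode_list_cons]
    rcases List.mem_cons.1 h with rfl | h
    · exact Nat.lt_succ_of_le (Nat.left_le_pair _ _)
    · exact (ih h).trans_le ((Nat.right_le_pair _ _).trans (Nat.le_succ _))

theorem encode_surjective : Function.Surjective encode := by
  intro n
  induction n using Nat.strong_induction_on with
  | _ n ih =>
    rcases h : n.unpair with ⟨a, b⟩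
    obtain rfl : Nat.pair a b = n := by rw [← Nat.pair_unpair n, h]
    cases a with
    | zero => exact ⟨var b, by simp⟩
    | succ f =>
      have hl : ∀ l : List ℕ, (∀ m ∈ l, m < Nat.pair (f + 1) b) →
          ∃ ts : List Term, ts.map encode = l := by
        intro l hl
        induction l with
        | nil => exact ⟨[], rfl⟩
        | cons m ms ihm =>
          obtain ⟨t, rfl⟩ := ih m (hl m (by simp))
          obtain ⟨ts, rfl⟩ := ihm (fun m hm => hl m (by simp [hm]))
          exact ⟨t :: ts, rfl⟩
      obtain ⟨ts, hts⟩ := hl (Denumerable.ofNat (List ℕ) b) (fun m hm => by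
        have := mem_le_encode_list hm
        have h2 : Encodable.encode (Denumerable.ofNat (List ℕ) b) = b :=
          Denumerable.encode_ofNat b
        have h3 := Nat.right_le_pair (f + 1) b
        omega)
      refine ⟨app f ts, ?_⟩
      rw [encode_app, hts]
      congr 1
      exact Denumerable.encode_ofNat b

/-- `Term.encode` is a bijection onto `ℕ`, so every natural number is the code of a unique term. -/
noncomputable instance instDenumerable : Denumerable Term :=
  Denumerable.mk' (Equiv.ofBijective encode ⟨encode_injective, encode_surjective⟩)

theorem encodable_encode (t : Term) : Encodable.encode t = t.encode := rfl

theorem encodable_encode_list (ts : List Term) :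
    Encodable.encode ts = Encodable.encode (ts.map encode) := by
  induction ts with
  | nil => rfl
  | cons a as ih =>
    rw [List.map_cons, Encodable.encode_list_cons, Encodable.encode_list_cons, ih]
    rfl

theorem encode_lt_app {f : ℕ} {ts : List Term} {t : Term} (h : t ∈ ts) :
    t.encode < (app f ts).encode := by
  rw [encode_app]
  exact (mem_le_encode_list (List.mem_map_of_mem h)).trans_le (Nat.right_le_pair _ _)

theorem primrec_app : Primrec₂ app := by
  have : Primrec fun p : ℕ × List Term => Nat.pair (p.1 + 1) (Encodable.encode p.2) :=
    Primrec₂.natPair.comp (Primrec.succ.comp Primrec.fst) (Primrec.encode.comp Primrec.snd)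
  refine Primrec.encode_iff.1 (this.of_eq fun p => ?_)
  rw [encodable_encode, encode_app, encodable_encode_list]

theorem primrec_var : Primrec var := by
  have : Primrec fun n : ℕ => Nat.pair 0 n :=
    Primrec₂.natPair.comp (Primrec.const 0) Primrec.id
  refine Primrec.encode_iff.1 (this.of_eq fun p => ?_)
  rw [encodable_encode, encode_var]

/-- Functions defined by primitive recursive structural recursion on terms are primitive
recursive: on codes this is course-of-values recursion, since the code of an argument is smaller
than the code of the whole term. -/
theorem primrec_rec {α σ : Type} [Primcodable α] [Primcodable σ] [Inhabited σ]
    (F : α → Term → σ) {g : α → ℕ → σ} {h : α → ℕ × List Term × List σ → σ}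
    (hg : Primrec₂ g) (hh : Primrec₂ h) (Fv : ∀ a n, F a (var n) = g a n)
    (Fa : ∀ a f ts, F a (app f ts) = h a (f, ts, ts.map (F a))) : Primrec₂ F := by
  let d : ℕ → Term := Denumerable.ofNat Term
  have hd : Primrec d := Primrec.ofNat Term
  have key : Primrec₂ fun (a : α) (n : ℕ) => F a (d n) := by
    let G : α → List σ → Option σ := fun a L =>
      some (if L.length.unpair.1 = 0 then g a L.length.unpair.2 else
        h a (L.length.unpair.1 - 1, Denumerable.ofNat (List Term) L.length.unpair.2,
          (Denumerable.ofNat (List Term) L.length.unpair.2).map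
            fun t => L.getD (Encodable.encode t) default))
    have hn : Primrec fun p : α × List σ => p.2.length.unpair :=
      Primrec.unpair.comp (Primrec.list_length.comp Primrec.snd)
    have hts : Primrec fun p : α × List σ =>
        Denumerable.ofNat (List Term) p.2.length.unpair.2 :=
      (Primrec.ofNat (List Term)).comp (Primrec.snd.comp hn)
    have hG : Primrec₂ G := by
      refine Primrec.option_some.comp (Primrec.ite
        (Primrec.eq.comp (Primrec.fst.comp hn) (Primrec.const 0))
        (hg.comp Primrec.fst (Primrec.snd.comp hn))
        (hh.comp Primrec.fst (Primrec.pair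
          (Primrec.nat_sub.comp (Primrec.fst.comp hn) (Primrec.const 1)) (Primrec.pair hts ?_))))
      exact Primrec.list_map hts ((Primrec.list_getD default).comp
        (Primrec.snd.comp Primrec.fst) (Primrec.encode.comp Primrec.snd))
    refine Primrec.nat_strong_rec _ hG ?_
    intro a n
    simp only [G, List.length_map, List.length_range, Option.some.injEq]
    obtain ⟨t, rfl⟩ := encode_surjective n
    have hdt : ∀ t : Term, d t.encode = t := fun t => Denumerable.ofNat_encode t
    rw [hdt]
    cases t with
    | var m => simp [Fv]
    | app f ts =>
      have hl : Denumerable.ofNat (List Term) (Encodable.encode (ts.map encode)) = ts := by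
        rw [← encodable_encode_list, Denumerable.ofNat_encode]
      rw [Fa, encode_app, if_neg (by simp)]
      simp only [Nat.unpair_pair, hl, Nat.add_sub_cancel]
      congr 3
      refine List.map_congr_left fun t ht => ?_
      have := encode_lt_app (f := f) ht
      rw [encode_app] at this
      rw [encodable_encode, List.getD_eq_getElem?_getD, List.getElem?_map,
        List.getElem?_range this]
      simp [hdt]
  exact (key.comp Primrec.fst (Primrec.encode.comp Primrec.snd)).of_eq fun p => by
    simp [d]

/-- Structural recursion on terms, with access to the arguments and to the values on them. -/
def fold {σ : Type} (g : ℕ → σ) (h : ℕ → List Term → List σ → σ) : Term → σ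
  | var n => g n
  | app f ts => h f ts (ts.attach.map (fun x => fold g h x.1))
decreasing_by
  have := List.sizeOf_lt_of_mem x.2
  simp only [Term.app.sizeOf_spec]; omega

@[simp] theorem fold_var {σ : Type} (g : ℕ → σ) (h : ℕ → List Term → List σ → σ) (n : ℕ) :
    fold g h (var n) = g n := by
  rw [fold]

@[simp] theorem fold_app {σ : Type} (g : ℕ → σ) (h : ℕ → List Term → List σ → σ) (f : ℕ)
    (ts : List Term) : fold g h (app f ts) = h f ts (ts.map (fold g h)) := by
  rw [fold, List.attach_map_val (f := fold g h)]

end Term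

/-! ### Computability of one-step rewriting, and membership in Σ⁰₁ -/

theorem PrimrecPred.forall_mem_list_param {α β : Type} [Primcodable α] [Primcodable β]
    {f : α → List β} {p : α → β → Prop} (hf : Primrec f)
    (hp : PrimrecPred fun x : α × β => p x.1 x.2) : PrimrecPred fun a => ∀ b ∈ f a, p a b := by
  have h : PrimrecRel fun (b : β) (a : α) => p a b :=
    PrimrecPred.comp hp (Primrec.pair Primrec.snd Primrec.fst)
  exact h.forall_mem_list.comp hf Primrec.id

theorem PrimrecPred.exists_mem_list_param {α β : Type} [Primcodable α] [Primcodable β]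
    {f : α → List β} {p : α → β → Prop} (hf : Primrec f)
    (hp : PrimrecPred fun x : α × β => p x.1 x.2) : PrimrecPred fun a => ∃ b ∈ f a, p a b := by
  have h : PrimrecRel fun (b : β) (a : α) => p a b :=
    PrimrecPred.comp hp (Primrec.pair Primrec.snd Primrec.fst)
  exact h.exists_mem_list.comp hf Primrec.id

theorem primrecPred_mem {α β : Type} [Primcodable α] [Primcodable β]
    {f : α → β} {g : α → List β} (hf : Primrec f) (hg : Primrec g) :
    PrimrecPred fun a => f a ∈ g a := by
  classical
  refine (PrimrecPred.exists_mem_list_param (p := fun a b => b = f a) hg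
    (Primrec.eq.comp Primrec.snd (hf.comp Primrec.fst))).of_eq fun a => ?_
  simp

@[simp] theorem wfTerm_var (sig : List (ℕ × ℕ)) (n : ℕ) : WFTerm sig (.var n) := .var n

@[simp] theorem wfTerm_app (sig : List (ℕ × ℕ)) (f : ℕ) (ts : List Term) :
    WFTerm sig (.app f ts) ↔ (f, ts.length) ∈ sig ∧ ∀ t ∈ ts, WFTerm sig t :=
  ⟨fun h => by cases h with | app h₁ h₂ => exact ⟨h₁, h₂⟩, fun h => .app h.1 h.2⟩

@[simp] theorem isVarOf_var (n m : ℕ) : IsVarOf n (.var m) ↔ n = m :=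
  ⟨fun h => by cases h; rfl, fun h => h ▸ .var⟩

@[simp] theorem isVarOf_app (n f : ℕ) (ts : List Term) :
    IsVarOf n (.app f ts) ↔ ∃ t ∈ ts, IsVarOf n t :=
  ⟨fun h => by cases h with | app h₁ h₂ => exact ⟨_, h₁, h₂⟩, fun ⟨_, h₁, h₂⟩ => .app h₁ h₂⟩

theorem primrec_wfTerm : PrimrecPred fun x : List (ℕ × ℕ) × Term => WFTerm x.1 x.2 := by
  classical
  refine ⟨Classical.decPred _, ?_⟩
  have hh : PrimrecPred fun x : List (ℕ × ℕ) × (ℕ × List Term × List Bool) =>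
      (x.2.1, x.2.2.1.length) ∈ x.1 ∧ ∀ b ∈ x.2.2.2, b = true := by
    refine PrimrecPred.and (primrecPred_mem ?_ Primrec.fst)
      (PrimrecPred.forall_mem_list_param (p := fun _ b => b = true) ?_
        (Primrec.eq.comp Primrec.snd (Primrec.const true)))
    · exact Primrec.pair (Primrec.fst.comp Primrec.snd)
        (Primrec.list_length.comp (Primrec.fst.comp (Primrec.snd.comp Primrec.snd)))
    · exact Primrec.snd.comp (Primrec.snd.comp Primrec.snd)
  have := Term.primrec_rec (fun (sig : List (ℕ × ℕ)) t => decide (WFTerm sig t))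
    (g := fun _ _ => true)
    (h := fun sig x => decide ((x.1, x.2.1.length) ∈ sig ∧ ∀ b ∈ x.2.2, b = true))
    (Primrec.const true) hh.decide (by simp) (by simp)
  exact (show Primrec fun x : List (ℕ × ℕ) × Term => decide (WFTerm x.1 x.2) from this).of_eq
    fun _ => by congr

/-- The list of (occurrences of) variables of a term. -/
def Term.vars : Term → List ℕ := Term.fold (fun n => [n]) (fun _ _ rs => rs.flatten)

theorem Term.mem_vars {n : ℕ} {t : Term} : n ∈ t.vars ↔ IsVarOf n t := by
  induction t using Term.induct with
  | hv m => simp [Term.vars]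
  | ha f ts ih =>
    simp only [Term.vars, fold_app, List.mem_flatten, List.mem_map, isVarOf_app] at ih ⊢
    constructor
    · rintro ⟨_, ⟨t, ht, rfl⟩, hn⟩
      exact ⟨t, ht, (ih t ht).1 hn⟩
    · rintro ⟨t, ht, hn⟩
      exact ⟨_, ⟨t, ht, rfl⟩, (ih t ht).2 hn⟩

theorem Term.primrec_vars : Primrec Term.vars := by
  have := Term.primrec_rec (fun (_ : Unit) t => Term.vars t)
    (g := fun _ n => [n]) (h := fun _ x => x.2.2.flatten)
    (Primrec.list_cons.comp Primrec.snd (Primrec.const []))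
    (Primrec.list_flatten.comp (Primrec.snd.comp (Primrec.snd.comp Primrec.snd)))
    (by simp [Term.vars]) (by simp [Term.vars])
  exact this.comp (Primrec.const ()) Primrec.id

theorem primrec_wfTRS :
    PrimrecPred fun x : List (ℕ × ℕ) × List (Term × Term) => WFTRS x.1 x.2 := by
  have hsig : PrimrecPred fun sig : List (ℕ × ℕ) => WFSig sig := by
    refine PrimrecPred.forall_mem_list_param (β := ℕ × ℕ)
      (p := fun (sig : List (ℕ × ℕ)) p => ∀ q ∈ sig, p.1 = q.1 → p.2 = q.2)
      Primrec.id (PrimrecPred.forall_mem_list_param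
        (β := ℕ × ℕ)
        (p := fun (x : List (ℕ × ℕ) × ℕ × ℕ) q => x.2.1 = q.1 → x.2.2 = q.2) Primrec.fst ?_)
    have h1 : PrimrecPred fun x : (List (ℕ × ℕ) × ℕ × ℕ) × ℕ × ℕ => x.1.2.1 = x.2.1 :=
      Primrec.eq.comp (Primrec.fst.comp (Primrec.snd.comp Primrec.fst))
        (Primrec.fst.comp Primrec.snd)
    have h2 : PrimrecPred fun x : (List (ℕ × ℕ) × ℕ × ℕ) × ℕ × ℕ => x.1.2.2 = x.2.2 :=
      Primrec.eq.comp (Primrec.snd.comp (Primrec.snd.comp Primrec.fst))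
        (Primrec.snd.comp Primrec.snd)
    exact (h1.not.or h2).of_eq fun x => imp_iff_not_or.symm
  refine (hsig.comp Primrec.fst).and (PrimrecPred.forall_mem_list_param
    (p := fun (x : List (ℕ × ℕ) × List (Term × Term)) p => WFTerm x.1 p.1 ∧ WFTerm x.1 p.2 ∧
    (∀ n : ℕ, p.1 ≠ .var n) ∧ (∀ n : ℕ, IsVarOf n p.2 → IsVarOf n p.1)) Primrec.snd ?_)
  have hs : Primrec fun x : (List (ℕ × ℕ) × List (Term × Term)) × Term × Term => x.1.1 :=
    Primrec.fst.comp Primrec.fst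
  have hl : Primrec fun x : (List (ℕ × ℕ) × List (Term × Term)) × Term × Term => x.2.1 :=
    Primrec.fst.comp Primrec.snd
  have hr : Primrec fun x : (List (ℕ × ℕ) × List (Term × Term)) × Term × Term => x.2.2 :=
    Primrec.snd.comp Primrec.snd
  refine (primrec_wfTerm.comp (Primrec.pair hs hl)).and
    ((primrec_wfTerm.comp (Primrec.pair hs hr)).and (.and ?_ ?_))
  -- A term is a variable iff the first component of its code is zero.
  · have h1 : PrimrecPred fun x : (List (ℕ × ℕ) × List (Term × Term)) × Term × Term =>
        (Encodable.encode x.2.1).unpair.1 = 0 :=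
      Primrec.eq.comp (Primrec.fst.comp (Primrec.unpair.comp (Primrec.encode.comp hl)))
        (Primrec.const 0)
    refine h1.not.of_eq fun x => ?_
    rw [Term.encodable_encode]
    cases x.2.1 <;> simp
  · refine (PrimrecPred.forall_mem_list_param (p := fun x n => n ∈ x.2.1.vars)
      (Term.primrec_vars.comp hr)
      (primrecPred_mem Primrec.snd (Term.primrec_vars.comp (hl.comp Primrec.fst)))).of_eq
      fun x => ?_
    simp only [Term.mem_vars]

/-- The substitution sending the variable `n` to the `n`-th entry of the list `s`
(and to `var 0` beyond the end of `s`). -/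
def listSubst (s : List Term) (n : ℕ) : Term := s.getD n (.var 0)

theorem primrec_subst : Primrec₂ fun (s : List Term) (t : Term) => t.subst (listSubst s) :=
  Term.primrec_rec _ (g := listSubst) (h := fun _ x => Term.app x.1 x.2.2)
    ((Primrec.list_getD _).comp Primrec.fst Primrec.snd)
    (Term.primrec_app.comp (Primrec.fst.comp Primrec.snd)
      (Primrec.snd.comp (Primrec.snd.comp Primrec.snd)))
    (by simp) (by simp)

theorem Term.subst_congr {σ τ : ℕ → Term} {t : Term} (h : ∀ n, IsVarOf n t → σ n = τ n) :
    t.subst σ = t.subst τ := by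
  induction t using Term.induct with
  | hv n => simpa using h n
  | ha f ts ih =>
    simp only [subst_app, app.injEq, true_and]
    exact List.map_congr_left fun t ht => ih t ht fun n hn => h n (.app ht hn)

theorem Term.encode_le_subst {σ : ℕ → Term} {t : Term} {n : ℕ} (h : IsVarOf n t) :
    (σ n).encode ≤ (t.subst σ).encode := by
  induction h with
  | var => simp
  | app ht _ ih =>
    rw [subst_app]
    exact ih.trans (encode_lt_app (List.mem_map_of_mem ht)).le

theorem Term.le_encode_of_isVarOf {t : Term} {n : ℕ} (h : IsVarOf n t) : n ≤ t.encode := by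
  induction h with
  | var => simpa using Nat.right_le_pair _ _
  | app ht _ ih => exact ih.trans (encode_lt_app ht).le

/-- All lists of length `N` with entries in `C`. -/
def listsOver (C : List Term) (N : ℕ) : List (List Term) :=
  Nat.rec [[]] (fun _ acc => C.flatMap fun s => acc.map fun l => s :: l) N

theorem mem_listsOver {C : List Term} {N : ℕ} {l : List Term} :
    l ∈ listsOver C N ↔ l.length = N ∧ ∀ t ∈ l, t ∈ C := by
  induction N generalizing l with
  | zero =>
    have : listsOver C 0 = [[]] := rfl
    simp only [this, List.mem_singleton, List.length_eq_zero_iff]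
    exact ⟨by rintro rfl; simp, fun h => h.1⟩
  | succ N ih =>
    have : listsOver C (N + 1) = C.flatMap fun s => (listsOver C N).map fun l => s :: l := rfl
    simp only [this, List.mem_flatMap, List.mem_map, ih]
    constructor
    · rintro ⟨s, hs, l, ⟨hl, hC⟩, rfl⟩
      exact ⟨by simp [hl], by simpa [hs] using hC⟩
    · rintro ⟨hl, hC⟩
      cases l with
      | nil => simp at hl
      | cons s l => exact ⟨s, hC s (by simp), l, ⟨by simpa using hl,
          fun t ht => hC t (by simp [ht])⟩, rfl⟩

theorem primrec_listsOver : Primrec₂ listsOver := by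
  refine Primrec.nat_rec (g := fun (C : List Term) (p : ℕ × List (List Term)) =>
    C.flatMap fun s => p.2.map fun l => s :: l) (Primrec.const [[]]) ?_
  refine Primrec.list_flatMap Primrec.fst (Primrec.list_map
    (Primrec.snd.comp (Primrec.snd.comp Primrec.fst)) ?_)
  exact Primrec.list_cons.comp (Primrec.snd.comp Primrec.fst) Primrec.snd

open Classical in
/-- The results of all root steps from `t`. A matching substitution maps each variable of the
left-hand side `l` to a subterm of `t`, whose code is at most that of `t`, and the variables of
`l` have indices at most the code of `l`; so it is found among finitely many candidates. -/
noncomputable def rootReducts (R : List (Term × Term)) (t : Term) : List Term :=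
  R.flatMap fun p =>
    (listsOver ((List.range (Encodable.encode t + 1)).map (Denumerable.ofNat Term))
      (Encodable.encode p.1 + 1)).flatMap fun s =>
        if p.1.subst (listSubst s) = t then [p.2.subst (listSubst s)] else []

theorem primrec_rootReducts : Primrec₂ rootReducts := by
  classical
  refine Primrec.list_flatMap Primrec.fst (Primrec.list_flatMap
    (primrec_listsOver.comp (Primrec.list_map (Primrec.list_range.comp
      (Primrec.succ.comp (Primrec.encode.comp (Primrec.snd.comp Primrec.fst))))
      ((Primrec.ofNat Term).comp Primrec.snd)) (Primrec.succ.comp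
      (Primrec.encode.comp (Primrec.fst.comp Primrec.snd)))) ?_)
  refine Primrec.ite (Primrec.eq.comp (primrec_subst.comp Primrec.snd
    (Primrec.fst.comp (Primrec.snd.comp Primrec.fst)))
    (Primrec.snd.comp (Primrec.fst.comp Primrec.fst)))
    (Primrec.list_cons.comp (primrec_subst.comp Primrec.snd
    (Primrec.snd.comp (Primrec.snd.comp Primrec.fst))) (Primrec.const []))
    (Primrec.const [])

theorem rewrite_of_mem_rootReducts {R : List (Term × Term)} {t u : Term}
    (h : u ∈ rootReducts R t) : Rewrite R t u := by
  simp only [rootReducts, List.mem_flatMap] at h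
  obtain ⟨p, hp, s, -, h⟩ := h
  split_ifs at h with hs
  · rw [List.mem_singleton.1 h, ← hs]
    exact .rule _ _ _ hp
  · simp at h

theorem mem_rootReducts {R : List (Term × Term)}
    (hR : ∀ p ∈ R, ∀ n, IsVarOf n p.2 → IsVarOf n p.1) {l r : Term} (σ : ℕ → Term)
    (h : (l, r) ∈ R) : r.subst σ ∈ rootReducts R (l.subst σ) := by
  classical
  -- Variables outside `l` are sent to `var 0`, whose code is `0`.
  let s : List Term := (List.range (l.encode + 1)).map fun n =>
    if IsVarOf n l then σ n else .var 0
  have hs : ∀ n, IsVarOf n l → listSubst s n = σ n := by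
    intro n hn
    have := Term.le_encode_of_isVarOf hn
    simp only [listSubst, s, List.getD_eq_getElem?_getD, List.getElem?_map]
    rw [List.getElem?_range (by omega)]
    simp [hn]
  simp only [rootReducts, List.mem_flatMap]
  refine ⟨(l, r), h, s, mem_listsOver.2 ⟨by simp [s, Term.encodable_encode], ?_⟩, ?_⟩
  · intro t ht
    simp only [List.mem_map, s] at ht
    obtain ⟨n, -, rfl⟩ := ht
    simp only [List.mem_map, List.mem_range]
    refine ⟨Encodable.encode (if IsVarOf n l then σ n else .var 0), ?_,
      Denumerable.ofNat_encode _⟩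
    rw [Term.encodable_encode, Term.encodable_encode, Nat.lt_succ_iff]
    split_ifs with hn
    · exact Term.encode_le_subst hn
    · simp [Nat.pair]
  · have h1 := Term.subst_congr hs
    have h2 : r.subst (listSubst s) = r.subst σ :=
      Term.subst_congr fun n hn => hs n (hR _ h n hn)
    simp [h1, h2]

/-- The results of all one-step rewrites of `t`: root steps, and steps inside an argument. -/
noncomputable def reducts (R : List (Term × Term)) : Term → List Term :=
  Term.fold (fun n => rootReducts R (.var n)) fun f ts rs =>
    rootReducts R (.app f ts) ++ (List.range ts.length).flatMap fun i =>
      (rs.getD i []).map fun u => .app f (ts.set i u)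

theorem primrec_reducts : Primrec₂ reducts := by
  refine Term.primrec_rec _ (g := fun R n => rootReducts R (.var n)) (h := fun R x =>
    rootReducts R (.app x.1 x.2.1) ++ (List.range x.2.1.length).flatMap fun i =>
      (x.2.2.getD i []).map fun u => .app x.1 (x.2.1.set i u)) ?_ ?_ (by simp [reducts])
      (by simp [reducts])
  · exact primrec_rootReducts.comp Primrec.fst (Term.primrec_var.comp Primrec.snd)
  · have hf : Primrec fun p : List (Term × Term) × ℕ × List Term × List (List Term) => p.2.1 :=
      Primrec.fst.comp Primrec.snd
    have hts : Primrec fun p : List (Term × Term) × ℕ × List Term × List (List Term) =>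
        p.2.2.1 := Primrec.fst.comp (Primrec.snd.comp Primrec.snd)
    have hrs : Primrec fun p : List (Term × Term) × ℕ × List Term × List (List Term) =>
        p.2.2.2 := Primrec.snd.comp (Primrec.snd.comp Primrec.snd)
    refine Primrec.list_append.comp (primrec_rootReducts.comp Primrec.fst
      (Term.primrec_app.comp hf hts)) (Primrec.list_flatMap (Primrec.list_range.comp
      (Primrec.list_length.comp hts)) (Primrec.list_map ((Primrec.list_getD []).comp
      (hrs.comp Primrec.fst) Primrec.snd) ?_))
    exact Term.primrec_app.comp (hf.comp (Primrec.fst.comp Primrec.fst))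
      (Primrec.list_set.comp (hts.comp (Primrec.fst.comp Primrec.fst))
        (Primrec.pair (Primrec.snd.comp Primrec.fst) Primrec.snd))

theorem mem_reducts_app {R : List (Term × Term)} {f : ℕ} {ts : List Term} {u : Term} :
    u ∈ reducts R (.app f ts) ↔ u ∈ rootReducts R (.app f ts) ∨
      ∃ (i : ℕ) (h : i < ts.length), ∃ v ∈ reducts R ts[i], u = .app f (ts.set i v) := by
  simp only [reducts, Term.fold_app, List.mem_append, List.mem_flatMap, List.mem_range,
    List.mem_map]
  refine or_congr Iff.rfl ⟨?_, ?_⟩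
  · rintro ⟨i, hi, v, hv, rfl⟩
    refine ⟨i, hi, v, ?_, rfl⟩
    simpa [List.getD_eq_getElem?_getD, hi] using hv
  · rintro ⟨i, hi, v, hv, rfl⟩
    refine ⟨i, hi, v, ?_, rfl⟩
    simpa [List.getD_eq_getElem?_getD, hi] using hv

theorem rewrite_of_mem_reducts {R : List (Term × Term)} {t u : Term} (h : u ∈ reducts R t) :
    Rewrite R t u := by
  induction t using Term.induct generalizing u with
  | hv n => exact rewrite_of_mem_rootReducts (by simpa [reducts] using h)
  | ha f ts ih =>
    rcases mem_reducts_app.1 h with h | ⟨i, hi, v, hv, rfl⟩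
    · exact rewrite_of_mem_rootReducts h
    · have := Rewrite.congr f (ts.take i) (ts.drop (i + 1)) _ _ (ih _ (List.getElem_mem hi) hv)
      rw [List.getElem_cons_drop, List.take_append_drop] at this
      rwa [List.set_eq_take_append_cons_drop, if_pos hi]

theorem mem_reducts_iff {R : List (Term × Term)}
    (hR : ∀ p ∈ R, ∀ n, IsVarOf n p.2 → IsVarOf n p.1) {t u : Term} :
    u ∈ reducts R t ↔ Rewrite R t u := by
  refine ⟨rewrite_of_mem_reducts, fun h => ?_⟩
  induction h with
  | rule l r σ h =>
    have := mem_rootReducts hR σ h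
    cases hl : l.subst σ with
    | var n => simpa [reducts, hl] using this
    | app f ts => exact mem_reducts_app.2 (.inl (hl ▸ this))
  | congr f ts₁ ts₂ t t' _ ih =>
    exact mem_reducts_app.2 (.inr ⟨ts₁.length, by simp, t', by simpa using ih, by simp⟩)

/-- The terms reachable from `t` in at most `k` steps. -/
noncomputable def reach (R : List (Term × Term)) (t : Term) (k : ℕ) : List Term :=
  Nat.rec [t] (fun _ L => L ++ L.flatMap (reducts R)) k

theorem primrec_reach :
    Primrec₂ fun (x : List (Term × Term) × Term) (k : ℕ) => reach x.1 x.2 k := by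
  refine Primrec.nat_rec (g := fun (x : List (Term × Term) × Term) (p : ℕ × List Term) =>
    p.2 ++ p.2.flatMap (reducts x.1))
    (Primrec.list_cons.comp Primrec.snd (Primrec.const [])) ?_
  have h : Primrec fun p : (List (Term × Term) × Term) × ℕ × List Term => p.2.2 :=
    Primrec.snd.comp Primrec.snd
  exact Primrec.list_append.comp h (Primrec.list_flatMap h (primrec_reducts.comp
    (Primrec.fst.comp (Primrec.fst.comp Primrec.fst)) Primrec.snd))

theorem reach_succ (R : List (Term × Term)) (t : Term) (k : ℕ) :
    reach R t (k + 1) = reach R t k ++ (reach R t k).flatMap (reducts R) := rfl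

theorem reach_mono {R : List (Term × Term)} {t : Term} {k m : ℕ} (h : k ≤ m) :
    reach R t k ⊆ reach R t m := by
  induction h with
  | refl => exact fun _ h => h
  | step _ ih =>
    rw [reach_succ]
    exact fun x hx => List.mem_append_left _ (ih hx)

theorem reduces_iff {R : List (Term × Term)}
    (hR : ∀ p ∈ R, ∀ n, IsVarOf n p.2 → IsVarOf n p.1) {t u : Term} :
    Reduces R t u ↔ ∃ k, u ∈ reach R t k := by
  constructor
  · intro h
    induction h with
    | refl => exact ⟨0, by simp [reach]⟩
    | tail _ hs ih =>
      obtain ⟨k, hk⟩ := ih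
      refine ⟨k + 1, ?_⟩
      rw [reach_succ]
      exact List.mem_append_right _ (List.mem_flatMap.2 ⟨_, hk, (mem_reducts_iff hR).2 hs⟩)
  · rintro ⟨k, hk⟩
    induction k generalizing u with
    | zero =>
      obtain rfl : u = t := by simpa [reach] using hk
      exact .refl
    | succ k ih =>
      rw [reach_succ] at hk
      rcases List.mem_append.1 hk with hk | hk
      · exact ih hk
      · obtain ⟨v, hv, hu⟩ := List.mem_flatMap.1 hk
        exact .tail (ih hv) ((mem_reducts_iff hR).1 hu)

/-- All peaks at `t` are joined by reductions of length at most `k`. -/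
def JoinsWithin (R : List (Term × Term)) (t : Term) (k : ℕ) : Prop :=
  ∀ t₁ ∈ reducts R t, ∀ t₂ ∈ reducts R t, ∃ d ∈ reach R t₁ k, d ∈ reach R t₂ k

theorem primrec_joinsWithin :
    PrimrecPred fun x : (List (Term × Term) × Term) × ℕ => JoinsWithin x.1.1 x.1.2 x.2 := by
  have hred : Primrec fun x : (List (Term × Term) × Term) × ℕ => reducts x.1.1 x.1.2 :=
    primrec_reducts.comp (Primrec.fst.comp Primrec.fst) (Primrec.snd.comp Primrec.fst)
  refine PrimrecPred.forall_mem_list_param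
    (p := fun (x : (List (Term × Term) × Term) × ℕ) t₁ => ∀ t₂ ∈ reducts x.1.1 x.1.2,
      ∃ d ∈ reach x.1.1 t₁ x.2, d ∈ reach x.1.1 t₂ x.2) hred ?_
  refine PrimrecPred.forall_mem_list_param
    (p := fun (y : ((List (Term × Term) × Term) × ℕ) × Term) t₂ =>
      ∃ d ∈ reach y.1.1.1 y.2 y.1.2, d ∈ reach y.1.1.1 t₂ y.1.2) (hred.comp Primrec.fst) ?_
  have hR : Primrec fun z : (((List (Term × Term) × Term) × ℕ) × Term) × Term => z.1.1.1.1 :=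
    Primrec.fst.comp (Primrec.fst.comp (Primrec.fst.comp Primrec.fst))
  have hk : Primrec fun z : (((List (Term × Term) × Term) × ℕ) × Term) × Term => z.1.1.2 :=
    Primrec.snd.comp (Primrec.fst.comp Primrec.fst)
  refine PrimrecPred.exists_mem_list_param
    (p := fun (z : (((List (Term × Term) × Term) × ℕ) × Term) × Term) d =>
      d ∈ reach z.1.1.1.1 z.2 z.1.1.2)
    (primrec_reach.comp (Primrec.pair hR (Primrec.snd.comp Primrec.fst)) hk) ?_
  exact primrecPred_mem Primrec.snd ((primrec_reach.comp (Primrec.pair hR Primrec.snd) hk).comp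
    Primrec.fst)

/-- Since a term has only finitely many one-step reducts, a single bound on the lengths of the
joining reductions serves all peaks. -/
theorem wcrOn_iff {R : List (Term × Term)}
    (hR : ∀ p ∈ R, ∀ n, IsVarOf n p.2 → IsVarOf n p.1) {t : Term} :
    WCRon R t ↔ ∃ k, JoinsWithin R t k := by
  constructor
  · intro h
    have bound : ∀ (L : List Term) (P : Term → ℕ → Prop), (∀ u k m, k ≤ m → P u k → P u m) →
        (∀ u ∈ L, ∃ k, P u k) → ∃ k, ∀ u ∈ L, P u k := by
      intro L P hP hL
      induction L with
      | nil => exact ⟨0, by simp⟩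
      | cons a L ih =>
        obtain ⟨k, hk⟩ := hL a (by simp)
        obtain ⟨m, hm⟩ := ih fun u hu => hL u (by simp [hu])
        refine ⟨max k m, fun u hu => ?_⟩
        rcases List.mem_cons.1 hu with rfl | hu
        · exact hP _ _ _ (le_max_left _ _) hk
        · exact hP _ _ _ (le_max_right _ _) (hm u hu)
    refine bound _ (fun t₁ k => ∀ t₂ ∈ reducts R t, ∃ d ∈ reach R t₁ k, d ∈ reach R t₂ k)
      (fun u k m hkm hu t₂ ht₂ => ?_) fun t₁ ht₁ => bound _ _ (fun u k m hkm hu => ?_)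
      fun t₂ ht₂ => ?_
    · obtain ⟨d, hd₁, hd₂⟩ := hu t₂ ht₂
      exact ⟨d, reach_mono hkm hd₁, reach_mono hkm hd₂⟩
    · obtain ⟨d, hd₁, hd₂⟩ := hu
      exact ⟨d, reach_mono hkm hd₁, reach_mono hkm hd₂⟩
    · obtain ⟨d, hd₁, hd₂⟩ := h t₁ t₂ (rewrite_of_mem_reducts ht₁) (rewrite_of_mem_reducts ht₂)
      obtain ⟨k₁, hk₁⟩ := (reduces_iff hR).1 hd₁
      obtain ⟨k₂, hk₂⟩ := (reduces_iff hR).1 hd₂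
      exact ⟨max k₁ k₂, d, reach_mono (le_max_left _ _) hk₁, reach_mono (le_max_right _ _) hk₂⟩
  · rintro ⟨k, h⟩ t₁ t₂ h₁ h₂
    obtain ⟨d, hd₁, hd₂⟩ := h t₁ ((mem_reducts_iff hR).2 h₁) t₂ ((mem_reducts_iff hR).2 h₂)
    exact ⟨d, (reduces_iff hR).2 ⟨k, hd₁⟩, (reduces_iff hR).2 ⟨k, hd₂⟩⟩

/-- The code of a TRS agrees with the one from the `Encodable` instances on pairs and lists, so
decoding is primitive recursive. -/
theorem encodeTRS_eq (R : List (Term × Term)) : encodeTRS R = Encodable.encode R := by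
  unfold encodeTRS
  induction R with
  | nil => rfl
  | cons p R ih =>
    rw [List.map_cons, Encodable.encode_list_cons, Encodable.encode_list_cons, ih]
    rfl

/-- The projection of a primitive recursive relation is the domain of an unbounded search. The type
`α` is denumerable, so each number decodes to exactly one element of `α`. -/
theorem sigma01_of_primrec {α : Type} [Denumerable α] {p : α → ℕ → Prop}
    (hp : PrimrecPred fun x : α × ℕ => p x.1 x.2) :
    Sigma01 {n : ℕ | ∃ k, p (Denumerable.ofNat α n) k} := by
  classical
  have h : Primrec₂ fun (n k : ℕ) => decide (p (Denumerable.ofNat α n) k) :=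
    (hp.comp (Primrec.pair ((Primrec.ofNat α).comp Primrec.fst) Primrec.snd)).decide
  refine ⟨fun n => Nat.rfind fun k => Part.some (decide (p (Denumerable.ofNat α n) k)),
    Partrec.nat_iff.1 (Partrec.rfind h.to_comp.partrec₂), fun n => ?_⟩
  exact (show _ ↔ _ by simp).trans Nat.rfind_dom.symm

/-- The set of codes of well-formed pairs `(R, t)` with `R` weakly confluent on `t` is r.e.:
search for a bound on the lengths of the joining reductions. -/
theorem sigma01_wcr :
    Sigma01 { n : ℕ | ∃ (sig : List (ℕ × ℕ)) (R : List (Term × Term)) (t : Term),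
      WFTRS sig R ∧ WFTerm sig t ∧ n = Nat.pair (encodeSig sig) (Nat.pair (encodeTRS R) t.encode) ∧
      WCRon R t } := by
  have hp : PrimrecPred fun x : (List (ℕ × ℕ) × List (Term × Term) × Term) × ℕ =>
      WFTRS x.1.1 x.1.2.1 ∧ WFTerm x.1.1 x.1.2.2 ∧ JoinsWithin x.1.2.1 x.1.2.2 x.2 := by
    have hsig : Primrec fun x : (List (ℕ × ℕ) × List (Term × Term) × Term) × ℕ => x.1.1 :=
      Primrec.fst.comp Primrec.fst
    have hR : Primrec fun x : (List (ℕ × ℕ) × List (Term × Term) × Term) × ℕ => x.1.2.1 :=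
      Primrec.fst.comp (Primrec.snd.comp Primrec.fst)
    have ht : Primrec fun x : (List (ℕ × ℕ) × List (Term × Term) × Term) × ℕ => x.1.2.2 :=
      Primrec.snd.comp (Primrec.snd.comp Primrec.fst)
    exact (primrec_wfTRS.comp (Primrec.pair hsig hR)).and
      ((primrec_wfTerm.comp (Primrec.pair hsig ht)).and
        (primrec_joinsWithin.comp (Primrec.pair (Primrec.pair hR ht) Primrec.snd)))
  have key := sigma01_of_primrec (p := fun (x : List (ℕ × ℕ) × List (Term × Term) × Term) k =>
      WFTRS x.1 x.2.1 ∧ WFTerm x.1 x.2.2 ∧ JoinsWithin x.2.1 x.2.2 k) hp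
  convert key using 1
  have hcode : ∀ (sig : List (ℕ × ℕ)) (R : List (Term × Term)) (t : Term),
      Nat.pair (encodeSig sig) (Nat.pair (encodeTRS R) t.encode) =
        Encodable.encode (sig, R, t) := by
    intro sig R t
    rw [encodeTRS_eq]
    rfl
  ext n
  simp only [Set.mem_ofPred_eq]
  constructor
  · rintro ⟨sig, R, t, h₁, h₂, rfl, h₃⟩
    obtain ⟨k, hk⟩ := (wcrOn_iff fun p hp => (h₁.2 p hp).2.2.2).1 h₃
    rw [hcode, Denumerable.ofNat_encode]
    exact ⟨k, h₁, h₂, hk⟩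
  · rintro ⟨k, h₁, h₂, h₃⟩
    refine ⟨_, _, _, h₁, h₂, ?_, (wcrOn_iff fun p hp => (h₁.2 p hp).2.2.2).2 ⟨k, h₃⟩⟩
    rw [hcode]
    exact (Denumerable.encode_ofNat n).symm

open Turing.ToPartrec (Code Cont Cfg stepNormal stepRet step)

/-! ### A universal rewriting system -/

namespace Machine

/-- The numeral `0`. -/
def zeroT : Term := .app 0 []

/-- The successor symbol on numerals. -/
def succT (x : Term) : Term := .app 1 [x]

/-- The empty list. -/
def nilT : Term := .app 2 []

/-- The list with head `x` and tail `v`. -/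
def consT (x v : Term) : Term := .app 3 [x, v]

/-- The term `norm(c, k, v)`: run the program `c` on the input `v`, then continue with `k`. -/
def normT (c k v : Term) : Term := .app 16 [c, k, v]

/-- The term `ret(k, v)`: hand the result `v` to the continuation `k`. -/
def retT (k v : Term) : Term := .app 17 [k, v]

/-- The normal form `done` in which halting computations end. -/
def doneT : Term := .app 18 []

/-- The term `start(c, k, v)`, which rewrites both to `done` and to `norm(c, k, v)`. -/
def startT (c k v : Term) : Term := .app 19 [c, k, v]

/-- Unary numerals. -/
def natT : ℕ → Term
  | 0 => .app 0 []
  | n + 1 => .app 1 [natT n]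

/-- Lists of numerals. -/
def listT : List ℕ → Term
  | [] => .app 2 []
  | n :: v => .app 3 [natT n, listT v]

/-- Programs as terms. -/
def codeT : Code → Term
  | .zero' => .app 4 []
  | .succ => .app 5 []
  | .tail => .app 6 []
  | .cons f g => .app 7 [codeT f, codeT g]
  | .comp f g => .app 8 [codeT f, codeT g]
  | .case f g => .app 9 [codeT f, codeT g]
  | .fix f => .app 10 [codeT f]

/-- Continuations as terms. -/
def contT : Cont → Term
  | .halt => .app 11 []
  | .cons₁ f v k => .app 12 [codeT f, listT v, contT k]
  | .cons₂ v k => .app 13 [listT v, contT k]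
  | .comp f k => .app 14 [codeT f, contT k]
  | .fix f k => .app 15 [codeT f, contT k]

/-- The signature of the universal system. -/
def sig : List (ℕ × ℕ) :=
  [(0, 0), (1, 1), (2, 0), (3, 2), (4, 0), (5, 0), (6, 0), (7, 2), (8, 2), (9, 2), (10, 1),
    (11, 0), (12, 3), (13, 2), (14, 2), (15, 2), (16, 3), (17, 2), (18, 0), (19, 3)]

/-- The rules of the universal system. -/
def rules : List (Term × Term) :=
  let x : Term := .var 0
  let v : Term := .var 1
  let k : Term := .var 2
  let f : Term := .var 3
  let g : Term := .var 4
  let w : Term := .var 5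
  [ (normT (.app 4 []) k v, retT k (consT zeroT v)),
    (normT (.app 5 []) k nilT, retT k (consT (succT zeroT) nilT)),
    (normT (.app 5 []) k (consT x v), retT k (consT (succT x) nilT)),
    (normT (.app 6 []) k nilT, retT k nilT),
    (normT (.app 6 []) k (consT x v), retT k v),
    (normT (.app 7 [f, g]) k v, normT f (.app 12 [g, v, k]) v),
    (normT (.app 8 [f, g]) k v, normT g (.app 14 [f, k]) v),
    (normT (.app 9 [f, g]) k nilT, normT f k nilT),
    (normT (.app 9 [f, g]) k (consT zeroT v), normT f k v),
    (normT (.app 9 [f, g]) k (consT (succT x) v), normT g k (consT x v)),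
    (normT (.app 10 [f]) k v, normT f (.app 15 [f, k]) v),
    (retT (.app 11 []) v, doneT),
    (retT (.app 12 [g, w, k]) v, normT g (.app 13 [v, k]) w),
    (retT (.app 13 [nilT, k]) v, retT k (consT zeroT v)),
    (retT (.app 13 [consT x w, k]) v, retT k (consT x v)),
    (retT (.app 14 [f, k]) v, normT f k v),
    (retT (.app 15 [f, k]) nilT, retT k nilT),
    (retT (.app 15 [f, k]) (consT zeroT v), retT k v),
    (retT (.app 15 [f, k]) (consT (succT x) v), normT f (.app 15 [f, k]) v),
    (startT f k v, doneT),
    (startT f k v, normT f k v) ]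

theorem wfTRS_rules : WFTRS sig rules := by
  refine ⟨by unfold WFSig sig; decide, ?_⟩
  simp [rules, sig, normT, retT, doneT, startT, zeroT, succT, nilT, consT]
  grind

theorem wf_natT (n : ℕ) : WFTerm sig (natT n) := by
  induction n with
  | zero => simp [natT, sig]
  | succ n ih => simp [natT, ih]; simp [sig]

theorem wf_listT (v : List ℕ) : WFTerm sig (listT v) := by
  induction v with
  | nil => simp [listT, sig]
  | cons n v ih => simp [listT, ih, wf_natT]; simp [sig]

theorem wf_codeT (c : Code) : WFTerm sig (codeT c) := by
  induction c <;> simp [codeT, *] <;> simp [sig]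

/-- The initial term for the program `c` on input `[n]`. -/
def initT (c : Code) (n : ℕ) : Term := startT (codeT c) (contT .halt) (listT [n])

theorem wf_initT (c : Code) (n : ℕ) : WFTerm sig (initT c n) := by
  simp [initT, startT, wf_codeT, wf_listT, contT]; simp [sig]

/-! ### One-step reducts of machine terms -/

/-- Terms without the symbols `norm`, `ret`, `start` (numbered `16`, `17`, `19`),
which head all left-hand sides; such terms are normal forms. -/
inductive Data : Term → Prop
  | app {f : ℕ} {ts : List Term} : f < 16 → (∀ t ∈ ts, Data t) → Data (.app f ts)

theorem data_app (f : ℕ) (ts : List Term) :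
    Data (.app f ts) ↔ f < 16 ∧ ∀ t ∈ ts, Data t :=
  ⟨fun h => by cases h with | app h₁ h₂ => exact ⟨h₁, h₂⟩, fun h => .app h.1 h.2⟩

theorem data_natT (n : ℕ) : Data (natT n) := by
  induction n <;> simp [natT, data_app, *]

theorem data_listT (v : List ℕ) : Data (listT v) := by
  induction v <;> simp [listT, data_app, data_natT, *]

theorem data_codeT (c : Code) : Data (codeT c) := by
  induction c <;> simp [codeT, data_app, *]

theorem data_contT (k : Cont) : Data (contT k) := by
  induction k <;> simp [contT, data_app, data_codeT, data_listT, *]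

theorem head_of_mem_rules {l r : Term} (h : (l, r) ∈ rules) :
    ∃ f ts, l = .app f ts ∧ (f = 16 ∨ f = 17 ∨ f = 19) := by
  simp only [rules, List.mem_cons, Prod.mk.injEq, List.not_mem_nil, or_false] at h
  rcases h with h | h | h | h | h | h | h | h | h | h | h | h | h | h | h | h | h | h | h | h | h <;>
    simp [h.1, normT, retT, startT]

theorem normalForm_of_data {t u : Term} (hd : Data t) (h : Rewrite rules t u) : False := by
  induction h with
  | rule l r σ h =>
    obtain ⟨f, ts, rfl, hf⟩ := head_of_mem_rules h
    rw [Term.subst_app, data_app] at hd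
    omega
  | congr f ts₁ ts₂ t t' _ ih =>
    rw [data_app] at hd
    exact ih (hd.2 t (by simp))

/-- If all arguments are data, only root steps are possible. -/
theorem root_of_data {f : ℕ} {ts : List Term} {u : Term} (hd : ∀ t ∈ ts, Data t)
    (h : Rewrite rules (.app f ts) u) :
    ∃ (l r : Term) (σ : ℕ → Term), (l, r) ∈ rules ∧ l.subst σ = .app f ts ∧ u = r.subst σ := by
  generalize ht : Term.app f ts = t at h
  cases h with
  | rule l r σ h => exact ⟨l, r, σ, h, rfl, rfl⟩
  | congr g ts₁ ts₂ t t' h =>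
    simp only [Term.app.injEq] at ht
    exact (normalForm_of_data (hd t (by simp [ht.2])) h).elim

/-- The unique one-step reduct of the term `norm(c, k, v)`. -/
def normNext : Code → Cont → List ℕ → Term
  | .zero', k, v => retT (contT k) (listT (0 :: v))
  | .succ, k, v => retT (contT k) (listT [v.headI.succ])
  | .tail, k, v => retT (contT k) (listT v.tail)
  | .cons f g, k, v => normT (codeT f) (contT (.cons₁ g v k)) (listT v)
  | .comp f g, k, v => normT (codeT g) (contT (.comp f k)) (listT v)
  | .case f _, k, [] => normT (codeT f) (contT k) (listT [])
  | .case f _, k, 0 :: v => normT (codeT f) (contT k) (listT v)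
  | .case _ g, k, (n + 1) :: v => normT (codeT g) (contT k) (listT (n :: v))
  | .fix f, k, v => normT (codeT f) (contT (.fix f k)) (listT v)

/-- The unique one-step reduct of the term `ret(k, v)`. -/
def retNext : Cont → List ℕ → Term
  | .halt, _ => doneT
  | .cons₁ f w k, v => normT (codeT f) (contT (.cons₂ v k)) (listT w)
  | .cons₂ w k, v => retT (contT k) (listT (w.headI :: v))
  | .comp f k, v => normT (codeT f) (contT k) (listT v)
  | .fix _ k, [] => retT (contT k) (listT [])
  | .fix _ k, 0 :: v => retT (contT k) (listT v)
  | .fix f k, (_ + 1) :: v => normT (codeT f) (contT (.fix f k)) (listT v)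

/-- The instance of the `i`-th rule under the substitution listed in `s`. -/
theorem rewrite_rules (i : ℕ) (hi : i < rules.length) (s : List Term) :
    Rewrite rules (rules[i].1.subst (listSubst s)) (rules[i].2.subst (listSubst s)) :=
  .rule _ _ _ (List.getElem_mem hi)

theorem rewrite_normNext (c : Code) (k : Cont) (v : List ℕ) :
    Rewrite rules (normT (codeT c) (contT k) (listT v)) (normNext c k v) := by
  cases c with
  | zero' =>
    simpa [rules, listSubst, normT, retT, zeroT, consT, normNext, codeT, listT, natT] using
      rewrite_rules 0 (by decide) [doneT, listT v, contT k]
  | succ =>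
    rcases v with _ | ⟨n, v⟩
    · simpa [rules, listSubst, normT, retT, zeroT, consT, succT, nilT, normNext, codeT, listT,
        natT] using rewrite_rules 1 (by decide) [doneT, doneT, contT k]
    · simpa [rules, listSubst, normT, retT, zeroT, consT, succT, nilT, normNext, codeT, listT,
        natT] using rewrite_rules 2 (by decide) [natT n, listT v, contT k]
  | tail =>
    rcases v with _ | ⟨n, v⟩
    · simpa [rules, listSubst, normT, retT, consT, nilT, normNext, codeT, listT]
        using rewrite_rules 3 (by decide) [doneT, doneT, contT k]
    · simpa [rules, listSubst, normT, retT, consT, nilT, normNext, codeT, listT]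
        using rewrite_rules 4 (by decide) [natT n, listT v, contT k]
  | cons f g =>
    simpa [rules, listSubst, normT, normNext, codeT, contT] using
      rewrite_rules 5 (by decide) [doneT, listT v, contT k, codeT f, codeT g]
  | comp f g =>
    simpa [rules, listSubst, normT, normNext, codeT, contT] using
      rewrite_rules 6 (by decide) [doneT, listT v, contT k, codeT f, codeT g]
  | case f g =>
    rcases v with _ | ⟨_ | n, v⟩
    · simpa [rules, listSubst, normT, nilT, normNext, codeT, listT] using
        rewrite_rules 7 (by decide) [doneT, doneT, contT k, codeT f, codeT g]
    · simpa [rules, listSubst, normT, consT, zeroT, normNext, codeT, listT, natT] using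
        rewrite_rules 8 (by decide) [doneT, listT v, contT k, codeT f, codeT g]
    · simpa [rules, listSubst, normT, consT, succT, normNext, codeT, listT, natT] using
        rewrite_rules 9 (by decide) [natT n, listT v, contT k, codeT f, codeT g]
  | fix f =>
    simpa [rules, listSubst, normT, normNext, codeT, contT] using
      rewrite_rules 10 (by decide) [doneT, listT v, contT k, codeT f]

theorem rewrite_retNext (k : Cont) (v : List ℕ) :
    Rewrite rules (retT (contT k) (listT v)) (retNext k v) := by
  cases k with
  | halt =>
    simpa [rules, listSubst, retT, doneT, retNext, contT] using
      rewrite_rules 11 (by decide) [doneT, listT v]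
  | cons₁ g w k =>
    simpa [rules, listSubst, retT, normT, retNext, contT] using
      rewrite_rules 12 (by decide) [doneT, listT v, contT k, doneT, codeT g, listT w]
  | cons₂ w k =>
    rcases w with _ | ⟨n, w⟩
    · simpa [rules, listSubst, retT, nilT, consT, zeroT, retNext, contT, listT, natT] using
        rewrite_rules 13 (by decide) [doneT, listT v, contT k]
    · simpa [rules, listSubst, retT, nilT, consT, zeroT, retNext, contT, listT, natT] using
        rewrite_rules 14 (by decide) [natT n, listT v, contT k, doneT, doneT, listT w]
  | comp f k =>
    simpa [rules, listSubst, retT, normT, retNext, contT] using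
      rewrite_rules 15 (by decide) [doneT, listT v, contT k, codeT f]
  | fix f k =>
    rcases v with _ | ⟨_ | n, v⟩
    · simpa [rules, listSubst, retT, nilT, retNext, contT, listT] using
        rewrite_rules 16 (by decide) [doneT, doneT, contT k, codeT f]
    · simpa [rules, listSubst, retT, consT, zeroT, retNext, contT, listT, natT] using
        rewrite_rules 17 (by decide) [doneT, listT v, contT k, codeT f]
    · simpa [rules, listSubst, retT, normT, consT, succT, retNext, contT, listT, natT] using
        rewrite_rules 18 (by decide) [natT n, listT v, contT k, codeT f]

/-- The arguments of `norm(c, k, v)` are data, so any step is a root step, and at most one rule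
matches. -/
theorem eq_normNext {c : Code} {k : Cont} {v : List ℕ} {u : Term}
    (h : Rewrite rules (normT (codeT c) (contT k) (listT v)) u) : u = normNext c k v := by
  obtain ⟨l, r, σ, hm, hl, rfl⟩ := root_of_data
    (by simp [data_codeT, data_contT, data_listT]) h
  simp only [rules, List.mem_cons, Prod.mk.injEq, List.not_mem_nil, or_false] at hm
  rcases hm with h | h | h | h | h | h | h | h | h | h | h | h | h | h | h | h | h | h | h | h | h <;>
    obtain ⟨rfl, rfl⟩ := h <;>
    simp [normT, retT, startT, zeroT, succT, nilT, consT] at hl <;>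
    rcases c with _ | _ | _ | ⟨f, g⟩ | ⟨f, g⟩ | ⟨f, g⟩ | f <;> simp [codeT] at hl <;>
    rcases v with _ | ⟨_ | n, v⟩ <;> simp [listT, natT] at hl <;>
    simp [normT, retT, normNext, contT, listT, natT, zeroT, succT, nilT, consT, hl]

theorem eq_retNext {k : Cont} {v : List ℕ} {u : Term}
    (h : Rewrite rules (retT (contT k) (listT v)) u) : u = retNext k v := by
  obtain ⟨l, r, σ, hm, hl, rfl⟩ := root_of_data
    (by simp [data_contT, data_listT]) h
  simp only [rules, List.mem_cons, Prod.mk.injEq, List.not_mem_nil, or_false] at hm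
  rcases hm with h | h | h | h | h | h | h | h | h | h | h | h | h | h | h | h | h | h | h | h | h <;>
    obtain ⟨rfl, rfl⟩ := h <;>
    simp [normT, retT, startT, zeroT, succT, nilT, consT] at hl <;>
    rcases k with _ | ⟨g, _ | ⟨_, w⟩, k⟩ | ⟨_ | ⟨_, w⟩, k⟩ | ⟨f, k⟩ | ⟨f, k⟩ <;>
    simp [contT, listT] at hl <;>
    rcases v with _ | ⟨_ | n, v⟩ <;> simp [listT, natT] at hl <;>
    simp [normT, retT, doneT, retNext, contT, listT, natT, zeroT, nilT, consT, hl]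

theorem not_rewrite_doneT {u : Term} (h : Rewrite rules doneT u) : False := by
  obtain ⟨l, r, σ, hm, hl, rfl⟩ := root_of_data (by simp) h
  obtain ⟨f, ts, rfl, hf⟩ := head_of_mem_rules hm
  simp only [Term.subst_app, Term.app.injEq] at hl
  omega

theorem rewrite_startT_iff (c : Code) (k : Cont) (v : List ℕ) (u : Term) :
    Rewrite rules (startT (codeT c) (contT k) (listT v)) u ↔
      u = doneT ∨ u = normT (codeT c) (contT k) (listT v) := by
  constructor
  · intro h
    obtain ⟨l, r, σ, hm, hl, rfl⟩ := root_of_data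
      (by simp [data_codeT, data_contT, data_listT]) h
    simp only [rules, List.mem_cons, Prod.mk.injEq, List.not_mem_nil, or_false] at hm
    rcases hm with h | h | h | h | h | h | h | h | h | h | h | h | h | h | h | h | h | h | h | h |
        h <;>
      obtain ⟨rfl, rfl⟩ := h <;>
      simp [normT, retT, startT] at hl <;>
      simp [normT, doneT, hl]
  · rintro (rfl | rfl)
    · simpa [rules, listSubst, startT, doneT] using
        rewrite_rules 19 (by decide) [doneT, listT v, contT k, codeT c]
    · simpa [rules, listSubst, startT, normT] using
        rewrite_rules 20 (by decide) [doneT, listT v, contT k, codeT c]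

/-! ### Simulation of the machine -/

/-- `Rep t x`: the term `t` represents the machine configuration `x`. Mathlib's `stepNormal` and
`stepRet` perform several rewrite steps at once, so a term stands for the configuration these
functions end in. -/
inductive Rep : Term → Cfg → Prop
  | norm (c : Code) (k : Cont) (v : List ℕ) :
      Rep (normT (codeT c) (contT k) (listT v)) (stepNormal c k v)
  | ret (k : Cont) (v : List ℕ) : Rep (retT (contT k) (listT v)) (stepRet k v)
  | done (v : List ℕ) : Rep doneT (.halt v)

theorem rep_normNext (c : Code) (k : Cont) (v : List ℕ) :
    ∃ y, Rep (normNext c k v) y ∧ StateTransition.Reaches step (stepNormal c k v) y := by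
  cases c with
  | zero' => exact ⟨_, .ret _ _, .single rfl⟩
  | succ => exact ⟨_, .ret _ _, .single rfl⟩
  | tail => exact ⟨_, .ret _ _, .single rfl⟩
  | cons f g => exact ⟨_, .norm _ _ _, .refl⟩
  | comp f g => exact ⟨_, .norm _ _ _, .refl⟩
  | case f g => rcases v with _ | ⟨_ | n, v⟩ <;> exact ⟨_, .norm _ _ _, .refl⟩
  | fix f => exact ⟨_, .norm _ _ _, .refl⟩

theorem rep_retNext (k : Cont) (v : List ℕ) : Rep (retNext k v) (stepRet k v) := by
  cases k with
  | halt => exact .done _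
  | cons₁ g w k => exact .norm _ _ _
  | cons₂ w k => exact .ret _ _
  | comp f k => exact .norm _ _ _
  | fix f k =>
    rcases v with _ | ⟨_ | n, v⟩
    · exact .ret _ _
    · exact .ret _ _
    · exact .norm _ _ _

theorem Rep.rewrite {t u : Term} {x : Cfg} (h : Rep t x) (hu : Rewrite rules t u) :
    ∃ y, Rep u y ∧ StateTransition.Reaches step x y := by
  cases h with
  | norm c k v => exact eq_normNext hu ▸ rep_normNext c k v
  | ret k v => exact ⟨_, eq_retNext hu ▸ rep_retNext k v, .refl⟩
  | done v => exact (not_rewrite_doneT hu).elim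

/-- Soundness of the simulation: reducts of a machine term represent configurations reached by
the machine. -/
theorem Rep.reduces {t u : Term} {x : Cfg} (h : Rep t x) (hu : Reduces rules t u) :
    ∃ y, Rep u y ∧ StateTransition.Reaches step x y := by
  induction hu with
  | refl => exact ⟨x, h, .refl⟩
  | tail _ hs ih =>
    obtain ⟨y, hy, hxy⟩ := ih
    obtain ⟨z, hz, hyz⟩ := hy.rewrite hs
    exact ⟨z, hz, hxy.trans hyz⟩

/-- The canonical term representing a configuration. -/
def cfgT : Cfg → Term
  | .halt _ => doneT
  | .ret k v => retT (contT k) (listT v)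

theorem reduces_stepNormal (c : Code) (k : Cont) (v : List ℕ) :
    Reduces rules (normT (codeT c) (contT k) (listT v)) (cfgT (stepNormal c k v)) := by
  induction c generalizing k v with
  | zero' => exact .single (rewrite_normNext .zero' k v)
  | succ => exact .single (rewrite_normNext .succ k v)
  | tail => exact .single (rewrite_normNext .tail k v)
  | cons f g ihf _ => exact .head (rewrite_normNext (.cons f g) k v) (ihf _ _)
  | comp f g _ ihg => exact .head (rewrite_normNext (.comp f g) k v) (ihg _ _)
  | case f g ihf ihg =>
    rcases v with _ | ⟨_ | n, v⟩
    · exact .head (rewrite_normNext (.case f g) k []) (ihf _ _)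
    · exact .head (rewrite_normNext (.case f g) k (0 :: v)) (ihf _ _)
    · exact .head (rewrite_normNext (.case f g) k ((n + 1) :: v)) (ihg _ _)
  | fix f ihf => exact .head (rewrite_normNext (.fix f) k v) (ihf _ _)

theorem reduces_stepRet (k : Cont) (v : List ℕ) :
    Reduces rules (retT (contT k) (listT v)) (cfgT (stepRet k v)) := by
  induction k generalizing v with
  | halt => exact .single (rewrite_retNext .halt v)
  | cons₁ g w k _ => exact .head (rewrite_retNext (.cons₁ g w k) v) (reduces_stepNormal _ _ _)
  | cons₂ w k ih => exact .head (rewrite_retNext (.cons₂ w k) v) (ih _)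
  | comp f k _ => exact .head (rewrite_retNext (.comp f k) v) (reduces_stepNormal _ _ _)
  | fix f k ih =>
    rcases v with _ | ⟨_ | n, v⟩
    · exact .head (rewrite_retNext (.fix f k) []) (ih _)
    · exact .head (rewrite_retNext (.fix f k) (0 :: v)) (ih _)
    · exact .head (rewrite_retNext (.fix f k) ((n + 1) :: v)) (reduces_stepNormal _ _ _)

theorem reduces_of_reaches {x y : Cfg} (h : StateTransition.Reaches step x y) :
    Reduces rules (cfgT x) (cfgT y) := by
  induction h with
  | refl => exact .refl
  | @tail y z _ hs ih =>
    cases y with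
    | halt v => simp [step] at hs
    | ret k v =>
      obtain rfl : stepRet k v = z := by simpa [step] using hs
      exact ih.trans (reduces_stepRet k v)

theorem dom_eval_iff (x : Cfg) : (StateTransition.eval step x).Dom ↔
    ∃ v, StateTransition.Reaches step x (.halt v) := by
  rw [Part.dom_iff_mem]
  simp only [StateTransition.mem_eval]
  constructor
  · rintro ⟨y, hy, hs⟩
    cases y with
    | halt v => exact ⟨v, hy⟩
    | ret k v => simp [step] at hs
  · rintro ⟨v, hv⟩
    exact ⟨_, hv, rfl⟩

/-- `norm(c, halt, v)` reduces to `done` exactly if the program `c` halts on `v`. -/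
theorem reduces_doneT_iff (c : Code) (v : List ℕ) :
    Reduces rules (normT (codeT c) (contT .halt) (listT v)) doneT ↔ (c.eval v).Dom := by
  have hdom : (c.eval v).Dom ↔ (StateTransition.eval step (stepNormal c .halt v)).Dom := by
    rw [Turing.ToPartrec.stepNormal_eval]
    exact Iff.rfl
  rw [hdom, dom_eval_iff]
  constructor
  · intro h
    obtain ⟨y, hy, hr⟩ := (Rep.norm c .halt v).reduces h
    generalize ht : doneT = t at hy
    cases hy with
    | done w => exact ⟨w, hr⟩
    | norm c k v => simp [doneT, normT] at ht
    | ret k v => simp [doneT, retT] at ht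
  · rintro ⟨w, hw⟩
    exact (reduces_stepNormal c .halt v).trans (reduces_of_reaches hw)

/-- The only nontrivial peak at `initT c n` is between the normal form `done` and the machine term. -/
theorem wcrOn_initT_iff (c : Code) (n : ℕ) : WCRon rules (initT c n) ↔ (c.eval [n]).Dom := by
  rw [← reduces_doneT_iff]
  have hdone : ∀ d, Reduces rules doneT d → d = doneT := by
    intro d h
    rcases Relation.ReflTransGen.cases_head h with h | ⟨u, hu, -⟩
    · exact h.symm
    · exact (not_rewrite_doneT hu).elim
  constructor
  · intro h
    obtain ⟨d, hd₁, hd₂⟩ := h _ _ ((rewrite_startT_iff _ _ _ _).2 (.inl rfl))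
      ((rewrite_startT_iff _ _ _ _).2 (.inr rfl))
    rwa [hdone d hd₁] at hd₂
  · intro h t₁ t₂ h₁ h₂
    refine ⟨doneT, ?_, ?_⟩
    · rcases (rewrite_startT_iff _ _ _ _).1 h₁ with rfl | rfl
      exacts [.refl, h]
    · rcases (rewrite_startT_iff _ _ _ _).1 h₂ with rfl | rfl
      exacts [.refl, h]

theorem primrec_natT : Primrec natT := by
  refine (Primrec.nat_rec₁ (f := fun _ t => Term.app 1 [t]) (.app 0 []) ?_).of_eq fun n => ?_
  · exact Term.primrec_app.comp (Primrec.const 1)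
      (Primrec.list_cons.comp Primrec.snd (Primrec.const []))
  · induction n with
    | zero => rfl
    | succ n ih => rw [natT, ← ih]

theorem primrec_initT (c : Code) : Primrec (initT c) := by
  refine Term.primrec_app.comp (Primrec.const 19) (Primrec.list_cons.comp (Primrec.const _)
    (Primrec.list_cons.comp (Primrec.const _) (Primrec.list_cons.comp
      (Term.primrec_app.comp (Primrec.const 3) (Primrec.list_cons.comp primrec_natT
        (Primrec.const _))) (Primrec.const []))))

end Machine

/-! ### Completeness -/

/-- Σ⁰₁ sets are halting sets of `Turing.ToPartrec` programs. -/
theorem exists_code_of_sigma01 {B : Set ℕ} (hB : Sigma01 B) :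
    ∃ c : Code, ∀ n, n ∈ B ↔ (c.eval [n]).Dom := by
  obtain ⟨f, hf, hfB⟩ := hB
  obtain ⟨c, hc⟩ := Turing.ToPartrec.Code.exists_code
    (Nat.Partrec'.part_iff₁.2 (Partrec.nat_iff.2 hf))
  refine ⟨c, fun n => ?_⟩
  have := hc (n ::ᵥ List.Vector.nil)
  rw [hfB, show [n] = (n ::ᵥ List.Vector.nil).1 from rfl, this]
  exact Iff.rfl

/-- Weak confluence of a finite TRS on a single term is Σ⁰₁-complete. -/
theorem wcr_single_term_Sigma01Complete :
    Sigma01Complete { n : ℕ | ∃ (sig : List (ℕ × ℕ)) (R : List (Term × Term)) (t : Term),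
      WFTRS sig R ∧ WFTerm sig t ∧ n = Nat.pair (encodeSig sig) (Nat.pair (encodeTRS R) t.encode) ∧
      WCRon R t } := by
  refine ⟨sigma01_wcr, fun B hB => ?_⟩
  obtain ⟨c, hc⟩ := exists_code_of_sigma01 hB
  refine ⟨fun n => Nat.pair (encodeSig Machine.sig)
    (Nat.pair (encodeTRS Machine.rules) (Machine.initT c n).encode), ?_, fun n => ?_⟩
  · exact (Primrec₂.natPair.comp (Primrec.const _) (Primrec₂.natPair.comp (Primrec.const _)
      (Primrec.encode.comp (Machine.primrec_initT c)))).to_comp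
  · rw [hc, ← Machine.wcrOn_initT_iff]
    constructor
    · exact fun h => ⟨_, _, _, Machine.wfTRS_rules, Machine.wf_initT c n, rfl, h⟩
    · rintro ⟨sig, R, t, -, -, h, hw⟩
      -- The encodings are injective, so the decoded system and term are the intended ones.
      simp only [Nat.pair_eq_pair, encodeTRS_eq, Encodable.encode_inj] at h
      rwa [h.2.1, Term.encode_injective h.2.2]
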